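/- Let (m, α, μ), (n, β, ν) and (c, γ, ξ) be classical systems, let ω be a transport plan from (m, α, μ) to (n, β, ν), and let ψ be a transport plan from (n, β, ν) to (c, γ, ξ). Define the m×c matrix φ by φ_{pt} = Σ_{r=1}^n ω_{pr} ψ_{rt} / ν_r. Then φ is a transport plan from (m, α, μ) to (c, γ, ξ). -/

import Mathlib

/-- A classical system: a row-stochastic matrix α with strictly positive invariant
probability vector μ. -/
def IsClassicalSystem {m : ℕ} (α : Fin m → Fin m → ℝ) (μ : Fin m → ℝ) : Prop :=
  (∀ p q, 0 ≤ α p q) ∧ (∀ p, ∑ q, α p q = 1) ∧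
  (∀ p, 0 < μ p) ∧ (∑ p, μ p = 1) ∧ (∀ q, ∑ p, μ p * α p q = μ q)

/-- A coupling of the probability vectors μ and ν. -/
def IsCoupling {m n : ℕ} (μ : Fin m → ℝ) (ν : Fin n → ℝ) (ω : Fin m → Fin n → ℝ) : Prop :=
  (∀ p r, 0 ≤ ω p r) ∧ (∀ p, ∑ r, ω p r = μ p) ∧ (∀ r, ∑ p, ω p r = ν r)

/-- A transport plan from the system (m, α, μ) to the system (n, β, ν): a coupling ω
satisfying Σ_p ω_{pr} α_{pq} = Σ_s ω_{qs} (ν_r/ν_s) β_{rs} for all q, r. -/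
def IsTransportPlan {m n : ℕ} (α : Fin m → Fin m → ℝ) (μ : Fin m → ℝ)
    (β : Fin n → Fin n → ℝ) (ν : Fin n → ℝ) (ω : Fin m → Fin n → ℝ) : Prop :=
  IsCoupling μ ν ω ∧
    ∀ (q : Fin m) (r : Fin n), ∑ p, ω p r * α p q = ∑ s, ω q s * (ν r / ν s * β r s)

/-- The quadratic transport cost of a coupling ω relative to the coordinates k and l. -/
def transportCost {d m n : ℕ} (k : Fin d → Fin m → ℝ) (l : Fin d → Fin n → ℝ)
    (ω : Fin m → Fin n → ℝ) : ℝ :=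
  ∑ i, ∑ p, ∑ r, ω p r * (k i p - l i r) ^ 2

/-- The Wasserstein distance from (m, α, μ) with coordinates k to (n, β, ν) with
coordinates l. -/
noncomputable def Wdist {d m n : ℕ} (α : Fin m → Fin m → ℝ) (μ : Fin m → ℝ)
    (β : Fin n → Fin n → ℝ) (ν : Fin n → ℝ)
    (k : Fin d → Fin m → ℝ) (l : Fin d → Fin n → ℝ) : ℝ :=
  sInf {x | ∃ ω, IsTransportPlan α μ β ν ω ∧ x = Real.sqrt (transportCost k l ω)}

/-!
Write `D` for the diagonal matrix of `ν` and `β̂ = D⁻¹ βᵀ D` for the time reversal of `β`. The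
balance condition on a transport plan says that `ω` intertwines `αᵀ` with `β̂`, and the composition
is `ω D⁻¹ ψ`. Since `β̂ D⁻¹ = D⁻¹ βᵀ`, the two intertwining relations chain:
`αᵀ ω D⁻¹ ψ = ω β̂ D⁻¹ ψ = ω D⁻¹ βᵀ ψ = ω D⁻¹ ψ γ̂`.
-/

section MatrixGluing

open Matrix

variable {ι κ τ K : Type*} [Fintype κ] [DecidableEq κ] [Semifield K] {ν : κ → K}

/-- The gluing of two couplings `ω` and `ψ` along their common marginal `ν`, with the middle
coordinate summed out; as a product of matrices, it is `ω D⁻¹ ψ` for `D` the diagonal of `ν`. -/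
def gluing (ν : κ → K) (ω : Matrix ι κ K) (ψ : Matrix κ τ K) : Matrix ι τ K :=
  ω * diagonal ν⁻¹ * ψ

/-- The time reversal of the transition matrix `β` with respect to the weights `ν`: the transition
matrix of the backward chain when `ν` is a positive invariant distribution of `β`. -/
def timeReversal (ν : κ → K) (β : Matrix κ κ K) : Matrix κ κ K :=
  diagonal ν⁻¹ * βᵀ * diagonal ν

lemma gluing_apply (ω : Matrix ι κ K) (ψ : Matrix κ τ K) (p : ι) (t : τ) :
    gluing ν ω ψ p t = ∑ r, ω p r * ψ r t / ν r := by
  rw [gluing, mul_apply]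
  simp only [mul_diagonal, Pi.inv_apply, div_eq_mul_inv, mul_right_comm]

lemma timeReversal_apply (β : Matrix κ κ K) (s r : κ) :
    timeReversal ν β s r = ν r / ν s * β r s := by
  simp only [timeReversal, mul_diagonal, diagonal_mul, transpose_apply, Pi.inv_apply]
  ring

lemma gluing_nonneg [LinearOrder K] [IsStrictOrderedRing K] {ω : Matrix ι κ K}
    {ψ : Matrix κ τ K} (hν : ∀ r, 0 ≤ ν r) (hω : ∀ p r, 0 ≤ ω p r) (hψ : ∀ r t, 0 ≤ ψ r t)
    (p : ι) (t : τ) : 0 ≤ gluing ν ω ψ p t := by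
  rw [gluing_apply]
  exact Finset.sum_nonneg fun r _ => div_nonneg (mul_nonneg (hω p r) (hψ r t)) (hν r)

lemma gluing_mulVec_one [Fintype τ] (hν : ∀ r, ν r ≠ 0) (ω : Matrix ι κ K) {ψ : Matrix κ τ K}
    (hψ : ψ *ᵥ 1 = ν) : gluing ν ω ψ *ᵥ 1 = ω *ᵥ 1 := by
  have inv_mulVec : diagonal ν⁻¹ *ᵥ ν = 1 := by
    ext r
    simp only [mulVec_diagonal, Pi.inv_apply, inv_mul_cancel₀ (hν r), Pi.one_apply]
  simp only [gluing, ← mulVec_mulVec, hψ, inv_mulVec]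

lemma one_vecMul_gluing [Fintype ι] (hν : ∀ r, ν r ≠ 0) {ω : Matrix ι κ K} (ψ : Matrix κ τ K)
    (hω : 1 ᵥ* ω = ν) : 1 ᵥ* gluing ν ω ψ = 1 ᵥ* ψ := by
  have vecMul_inv : ν ᵥ* diagonal ν⁻¹ = 1 := by
    ext r
    simp only [vecMul_diagonal, Pi.inv_apply, mul_inv_cancel₀ (hν r), Pi.one_apply]
  simp only [gluing, ← vecMul_vecMul, hω, vecMul_inv]

lemma timeReversal_mul_diagonal_inv (hν : ∀ r, ν r ≠ 0) (β : Matrix κ κ K) :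
    timeReversal ν β * diagonal ν⁻¹ = diagonal ν⁻¹ * βᵀ := by
  ext s r
  simp only [timeReversal, mul_diagonal, Pi.inv_apply, mul_inv_cancel_right₀ (hν r)]

lemma mul_gluing_eq_gluing_mul [Fintype ι] [Fintype τ] (hν : ∀ r, ν r ≠ 0)
    {A : Matrix ι ι K} {β : Matrix κ κ K} {C : Matrix τ τ K}
    {ω : Matrix ι κ K} {ψ : Matrix κ τ K}
    (hω : A * ω = ω * timeReversal ν β) (hψ : βᵀ * ψ = ψ * C) :
    A * gluing ν ω ψ = gluing ν ω ψ * C :=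
  calc A * (ω * diagonal ν⁻¹ * ψ)
      = A * ω * diagonal ν⁻¹ * ψ := by simp only [Matrix.mul_assoc]
    _ = ω * (timeReversal ν β * diagonal ν⁻¹) * ψ := by rw [hω, Matrix.mul_assoc ω]
    _ = ω * diagonal ν⁻¹ * (βᵀ * ψ) := by
      rw [timeReversal_mul_diagonal_inv hν]
      simp only [Matrix.mul_assoc]
    _ = ω * diagonal ν⁻¹ * ψ * C := by rw [hψ, Matrix.mul_assoc _ ψ C]

end MatrixGluing

section TransportPlan

open Matrix

variable {m n c : ℕ} {α : Fin m → Fin m → ℝ} {μ : Fin m → ℝ} {β : Fin n → Fin n → ℝ}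
  {ν : Fin n → ℝ} {γ : Fin c → Fin c → ℝ} {ξ : Fin c → ℝ}
  {ω : Fin m → Fin n → ℝ} {ψ : Fin n → Fin c → ℝ}

lemma isCoupling_iff_mulVec_vecMul :
    IsCoupling μ ν ω ↔ (∀ p r, 0 ≤ ω p r) ∧ of ω *ᵥ 1 = μ ∧ 1 ᵥ* of ω = ν := by
  simp only [IsCoupling, funext_iff, mulVec, vecMul, dotProduct, of_apply, Pi.one_apply, mul_one,
    one_mul]

lemma isTransportPlan_iff_transpose_mul :
    IsTransportPlan α μ β ν ω ↔
      IsCoupling μ ν ω ∧ (of α)ᵀ * of ω = of ω * timeReversal ν (of β) := by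
  simp only [IsTransportPlan, ← Matrix.ext_iff, mul_apply, transpose_apply, of_apply,
    timeReversal_apply, mul_comm (α _ _)]

lemma IsCoupling.gluing (hν : ∀ r, 0 < ν r) (hω : IsCoupling μ ν ω) (hψ : IsCoupling ν ξ ψ) :
    IsCoupling μ ξ (gluing ν (of ω) (of ψ)) := by
  have ν_ne_zero : ∀ r, ν r ≠ 0 := fun r => (hν r).ne'
  obtain ⟨ω_nonneg, ω_row, ω_col⟩ := isCoupling_iff_mulVec_vecMul.mp hω
  obtain ⟨ψ_nonneg, ψ_row, ψ_col⟩ := isCoupling_iff_mulVec_vecMul.mp hψ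
  exact isCoupling_iff_mulVec_vecMul.mpr
    ⟨gluing_nonneg (fun r => (hν r).le) ω_nonneg ψ_nonneg,
      (gluing_mulVec_one ν_ne_zero _ ψ_row).trans ω_row,
      (one_vecMul_gluing ν_ne_zero _ ω_col).trans ψ_col⟩

theorem stmt_8_general (hν : ∀ r, 0 < ν r)
    (hω : IsTransportPlan α μ β ν ω) (hψ : IsTransportPlan β ν γ ξ ψ) :
    IsTransportPlan α μ γ ξ (fun p t => ∑ r, ω p r * ψ r t / ν r) := by
  have sum_eq_gluing : (fun p t => ∑ r, ω p r * ψ r t / ν r) = gluing ν (of ω) (of ψ) :=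
    funext₂ fun p t => (gluing_apply (of ω) (of ψ) p t).symm
  obtain ⟨ω_coupling, ω_intertwines⟩ := isTransportPlan_iff_transpose_mul.mp hω
  obtain ⟨ψ_coupling, ψ_intertwines⟩ := isTransportPlan_iff_transpose_mul.mp hψ
  rw [sum_eq_gluing]
  exact isTransportPlan_iff_transpose_mul.mpr ⟨ω_coupling.gluing hν ψ_coupling,
    mul_gluing_eq_gluing_mul (fun r => (hν r).ne') ω_intertwines ψ_intertwines⟩

end TransportPlan

/-- The composition φ_{pt} = Σ_r ω_{pr} ψ_{rt} / ν_r of a transport plan ω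
from (m, α, μ) to (n, β, ν) with a transport plan ψ from (n, β, ν) to (c, γ, ξ) is a
transport plan from (m, α, μ) to (c, γ, ξ). -/
theorem stmt_8 {m n c : ℕ} (α : Fin m → Fin m → ℝ) (μ : Fin m → ℝ)
    (β : Fin n → Fin n → ℝ) (ν : Fin n → ℝ)
    (γ : Fin c → Fin c → ℝ) (ξ : Fin c → ℝ)
    (hA : IsClassicalSystem α μ) (hB : IsClassicalSystem β ν)
    (hC : IsClassicalSystem γ ξ)
    (ω : Fin m → Fin n → ℝ) (ψ : Fin n → Fin c → ℝ)
    (hω : IsTransportPlan α μ β ν ω) (hψ : IsTransportPlan β ν γ ξ ψ) :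
    IsTransportPlan α μ γ ξ (fun p t => ∑ r, ω p r * ψ r t / ν r) :=
  stmt_8_general hB.2.2.1 hω hψ
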